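/- arXiv:2308.07987 — 5 statements merged into one kernel-verified Lean document; each statement's English description precedes it below -/
import Mathlib

section
/- Let A ∈ ℝ^{m×n} have unit-norm rows a_1,…,a_m, let x ∈ ℝ^n, b = Ax, and let b̂ = b + c where the corruption c is supported on C ⊆ {1,…,m} with |C| ≤ βm. Fix q ∈ (0,1), α ∈ (0,1] with α(1−q) > β. Let τ ⊆ {1,…,m} be any subset with |τ| = ⌈αm⌉, let v ∈ ℝ^n be arbitrary, and let γ(v) be the q-quantile of the multiset {|⟨a_j, v⟩ − b̂_j| : j ∈ τ}. Then γ(v) ≤ σ_max(A)/√(m[α(1−q) − β]) · ‖v − x‖. -/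
open Finset

/-- The largest singular value of `A`, i.e. `sup_{‖x‖ = 1} ‖A x‖` (Euclidean norms). -/
noncomputable def sigmaMax {m n : ℕ} (A : Matrix (Fin m) (Fin n) ℝ) : ℝ :=
  sSup {r : ℝ | ∃ x : Fin n → ℝ, (∑ j, (x j) ^ 2) = 1 ∧
    r = Real.sqrt (∑ i, (∑ j, A i j * x j) ^ 2)}

theorem sigmaMax_bound {m n : ℕ}
    (A : Matrix (Fin m) (Fin n) ℝ) (hrows : ∀ i, ∑ j, (A i j) ^ 2 = 1) (y : Fin n → ℝ) :
    Real.sqrt (∑ i, (∑ j, A i j * y j) ^ 2) ≤ sigmaMax A * Real.sqrt (∑ j, (y j) ^ 2) := by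
  have hN0 : 0 ≤ ∑ j, (y j) ^ 2 := Finset.sum_nonneg fun _ _ => sq_nonneg _
  rcases hN0.eq_or_lt with h | h
  · have hy : ∀ j, y j = 0 := by
      intro j
      have := (Finset.sum_eq_zero_iff_of_nonneg (fun j _ => sq_nonneg (y j))).1 h.symm j
        (Finset.mem_univ j)
      exact pow_eq_zero_iff (two_ne_zero) |>.1 this
    simp [hy]
  · set N := ∑ j, (y j) ^ 2 with hN
    have hs : 0 < Real.sqrt N := Real.sqrt_pos.2 h
    have hsq : Real.sqrt N ^ 2 = N := Real.sq_sqrt hN0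
    have hbdd : BddAbove {r : ℝ | ∃ x : Fin n → ℝ, (∑ j, (x j) ^ 2) = 1 ∧
        r = Real.sqrt (∑ i, (∑ j, A i j * x j) ^ 2)} := by
      refine ⟨Real.sqrt m, ?_⟩
      rintro r ⟨z, hz, rfl⟩
      apply Real.sqrt_le_sqrt
      calc ∑ i, (∑ j, A i j * z j) ^ 2 ≤ ∑ i : Fin m, (1 : ℝ) := by
            apply Finset.sum_le_sum
            intro i _
            have := Finset.sum_mul_sq_le_sq_mul_sq Finset.univ (A i) z
            rw [hrows i, hz, one_mul] at this
            exact this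
        _ = m := by simp
    have hle : Real.sqrt (∑ i, (∑ j, A i j * (y j / Real.sqrt N)) ^ 2) ≤ sigmaMax A := by
      apply le_csSup hbdd
      refine ⟨fun j => y j / Real.sqrt N, ?_, rfl⟩
      simp only [div_pow, hsq]
      rw [← Finset.sum_div, ← hN]
      exact div_self h.ne'
    have he : ∑ i, (∑ j, A i j * (y j / Real.sqrt N)) ^ 2
        = (∑ i, (∑ j, A i j * y j) ^ 2) / N := by
      simp only [← mul_div_assoc, ← Finset.sum_div, div_pow, hsq]
    rw [he, Real.sqrt_div' _ hN0, div_le_iff₀ hs] at hle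
    exact hle

/-- **Quantile bound (Lemma 1).**  If `A` has unit-norm rows, `b = Ax`, `b̂ = b + c` with `c`
supported on `C`, `|C| ≤ βm`, `q ∈ (0,1)`, `α ∈ (0,1]`, `α(1-q) > β`, `τ` is any sample with
`|τ| = ⌈αm⌉` and `γ` is the `q`-quantile of the residual multiset `{|⟨a_j, v⟩ - b̂_j|}_{j ∈ τ}`
(i.e. `γ` is one of these residuals and exactly `⌊q|τ|⌋` of them are `≤ γ`), then
`γ ≤ σ_max(A)/√(m[α(1-q) - β]) · ‖v - x‖`. -/
theorem quantile_bound {m n : ℕ}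
    (A : Matrix (Fin m) (Fin n) ℝ) (hrows : ∀ i, ∑ j, (A i j) ^ 2 = 1)
    (x : Fin n → ℝ) (b c bhat : Fin m → ℝ)
    (hb : ∀ i, b i = ∑ j, A i j * x j)
    (hbhat : ∀ i, bhat i = b i + c i)
    (C : Finset (Fin m)) (hsupp : ∀ i, c i ≠ 0 → i ∈ C)
    (β : ℝ) (hC : (C.card : ℝ) ≤ β * (m : ℝ))
    (q : ℝ) (hq0 : 0 < q) (hq1 : q < 1)
    (α : ℝ) (hα0 : 0 < α) (hα1 : α ≤ 1)
    (hαqβ : β < α * (1 - q))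
    (τ : Finset (Fin m)) (hτ : τ.card = ⌈α * (m : ℝ)⌉₊)
    (v : Fin n → ℝ) (γ : ℝ)
    (hγmem : ∃ i ∈ τ, |(∑ j, A i j * v j) - bhat i| = γ)
    (hγcount : (τ.filter (fun i => |(∑ j, A i j * v j) - bhat i| ≤ γ)).card
      = ⌊q * (τ.card : ℝ)⌋₊) :
    γ ≤ sigmaMax A / Real.sqrt ((m : ℝ) * (α * (1 - q) - β)) *
      Real.sqrt (∑ j, (v j - x j) ^ 2) := by
  obtain ⟨i0, hi0, hi0γ⟩ := hγmem
  have hγ0 : 0 ≤ γ := hi0γ ▸ abs_nonneg _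
  have hm : (0 : ℝ) < m := by exact_mod_cast i0.pos
  have hK : 0 < (m : ℝ) * (α * (1 - q) - β) := mul_pos hm (by linarith)
  set K := (m : ℝ) * (α * (1 - q) - β) with hKdef
  have hB := sigmaMax_bound A hrows (fun j => v j - x j)
  set S := (τ.filter (fun i => ¬ |(∑ j, A i j * v j) - bhat i| ≤ γ)) \ C with hS
  have hcard1 := Finset.card_filter_add_card_filter_not (s := τ)
    (fun i => |(∑ j, A i j * v j) - bhat i| ≤ γ)
  have hcard2 := Finset.le_card_sdiff C
    (τ.filter (fun i => ¬ |(∑ j, A i j * v j) - bhat i| ≤ γ))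
  have hfl : (⌊q * (τ.card : ℝ)⌋₊ : ℝ) ≤ q * τ.card := Nat.floor_le (by positivity)
  have hce : α * m ≤ (τ.card : ℝ) := by rw [hτ]; exact Nat.le_ceil _
  have hSK : K ≤ S.card := by
    rw [hγcount] at hcard1
    have h2 : (τ.filter (fun i => ¬ |(∑ j, A i j * v j) - bhat i| ≤ γ)).card - C.card ≤ S.card := by
      convert hcard2
    have h3 : τ.card ≤ S.card + C.card + ⌊q * (τ.card : ℝ)⌋₊ := by omega
    have h4 : (τ.card : ℝ) ≤ S.card + C.card + (⌊q * (τ.card : ℝ)⌋₊ : ℝ) := by exact_mod_cast h3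
    have h5 : α * m * (1 - q) ≤ τ.card * (1 - q) :=
      mul_le_mul_of_nonneg_right hce (by linarith)
    rw [hKdef]
    nlinarith
  have hsum : K * γ ^ 2 ≤ ∑ i, (∑ j, A i j * (v j - x j)) ^ 2 := by
    calc K * γ ^ 2 ≤ S.card * γ ^ 2 := mul_le_mul_of_nonneg_right hSK (sq_nonneg _)
      _ = ∑ i ∈ S, γ ^ 2 := by simp
      _ ≤ ∑ i ∈ S, (∑ j, A i j * (v j - x j)) ^ 2 := by
          apply Finset.sum_le_sum
          intro i hi
          rw [hS, Finset.mem_sdiff, Finset.mem_filter, not_le] at hi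
          obtain ⟨⟨_, hi1⟩, hi2⟩ := hi
          have hc : c i = 0 := by
            by_contra hne
            exact hi2 (hsupp i hne)
          have he : ∑ j, A i j * (v j - x j) = (∑ j, A i j * v j) - bhat i := by
            rw [hbhat, hb, hc, add_zero, ← Finset.sum_sub_distrib]
            exact Finset.sum_congr rfl fun j _ => mul_sub _ _ _
          rw [he, ← sq_abs (_ - _)]
          exact pow_le_pow_left₀ hγ0 hi1.le 2
      _ ≤ _ := Finset.sum_le_sum_of_subset_of_nonneg (Finset.subset_univ _)
          fun _ _ _ => sq_nonneg _
  have hsK : 0 < Real.sqrt K := Real.sqrt_pos.2 hK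
  rw [div_mul_eq_mul_div, le_div_iff₀ hsK]
  refine le_trans ?_ hB
  apply Real.le_sqrt_of_sq_le
  rw [mul_pow, Real.sq_sqrt hK.le, mul_comm]
  exact hsum
end

section
/- Let A ∈ ℝ^{m×n} have unit-norm rows a_1,…,a_m, let x ∈ ℝ^n, b = Ax, and let b̂ = b + c where c is supported on C ⊆ {1,…,m} with |C| ≤ βm. Fix q ∈ (0,1) and α ∈ (0,1] with α(1−q) > β, let τ ⊆ {1,…,m} with |τ| = ⌈αm⌉, let v ∈ ℝ^n, and let γ(v) be the q-quantile of {|⟨a_j, v⟩ − b̂_j| : j ∈ τ}. Then γ(v)² · m[α(1−q) − β] ≤ Σ_{i ∈ τ, i ∉ C} |⟨a_i, v⟩ − b̂_i|². (In particular, at least ⌈αm⌉ − ⌊q⌈αm⌉⌋ of the residuals {|⟨a_j, v⟩ − b̂_j|}_{j ∈ τ} are at least γ(v), and at least m[α(1−q) − β] of these belong to uncorrupted equations.) -/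
open Finset

/-- If `A` has unit-norm rows, `b = Ax`, `b̂ = b + c` with `c` supported on `C`, `|C| ≤ βm`,
`q ∈ (0,1)`, `α ∈ (0,1]` with `α(1-q) > β`, `|τ| = ⌈αm⌉`, and `γ` is the `q`-quantile of the
residuals `{|⟨a_j, v⟩ - b̂_j|}_{j ∈ τ}`, then `γ² · m[α(1-q) - β] ≤ Σ_{i ∈ τ, i ∉ C} |⟨a_i, v⟩ - b̂_i|²`.
In particular, at least `⌈αm⌉ - ⌊q⌈αm⌉⌋` of the residuals indexed by `τ` are at least `γ`, and at
least `m[α(1-q) - β]` of these belong to uncorrupted equations. -/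
theorem quantile_residual_sum_bound {m n : ℕ}
    (A : Matrix (Fin m) (Fin n) ℝ) (hrows : ∀ i, ∑ j, (A i j) ^ 2 = 1)
    (x : Fin n → ℝ) (b c bhat : Fin m → ℝ)
    (hb : ∀ i, b i = ∑ j, A i j * x j)
    (hbhat : ∀ i, bhat i = b i + c i)
    (C : Finset (Fin m)) (hsupp : ∀ i, c i ≠ 0 → i ∈ C)
    (β : ℝ) (hC : (C.card : ℝ) ≤ β * (m : ℝ))
    (q : ℝ) (hq0 : 0 < q) (hq1 : q < 1)
    (α : ℝ) (hα0 : 0 < α) (hα1 : α ≤ 1)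
    (hαqβ : β < α * (1 - q))
    (τ : Finset (Fin m)) (hτ : τ.card = ⌈α * (m : ℝ)⌉₊)
    (v : Fin n → ℝ) (γ : ℝ)
    (hγmem : ∃ i ∈ τ, |(∑ j, A i j * v j) - bhat i| = γ)
    (hγcount : (τ.filter (fun i => |(∑ j, A i j * v j) - bhat i| ≤ γ)).card
      = ⌊q * (τ.card : ℝ)⌋₊) :
    γ ^ 2 * ((m : ℝ) * (α * (1 - q) - β))
      ≤ ∑ i ∈ τ \ C, |(∑ j, A i j * v j) - bhat i| ^ 2
    ∧ (τ.card : ℝ) - (⌊q * (τ.card : ℝ)⌋₊ : ℝ)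
      ≤ ((τ.filter (fun i => γ ≤ |(∑ j, A i j * v j) - bhat i|)).card : ℝ)
    ∧ (m : ℝ) * (α * (1 - q) - β)
      ≤ (((τ.filter (fun i => γ ≤ |(∑ j, A i j * v j) - bhat i|)) \ C).card : ℝ) := by
  obtain ⟨i0, -, hi0⟩ := hγmem
  have hγ0 : 0 ≤ γ := hi0 ▸ abs_nonneg _
  clear hi0
  generalize hr : (fun i => |(∑ j, A i j * v j) - bhat i|) = r at *
  have hr' : ∀ i, |(∑ j, A i j * v j) - bhat i| = r i := fun i => congrFun hr i
  simp only [hr'] at *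
  have h2 : (τ.card : ℝ) - (⌊q * (τ.card : ℝ)⌋₊ : ℝ)
      ≤ ((τ.filter (fun i => γ ≤ r i)).card : ℝ) := by
    rw [← hγcount]
    have hsub : τ ⊆ τ.filter (fun i => r i ≤ γ) ∪ τ.filter (fun i => γ ≤ r i) := by
      intro i hi
      rcases le_total (r i) γ with h | h <;> simp [hi, h]
    have h := (Finset.card_le_card hsub).trans (Finset.card_union_le _ _)
    have h' : (τ.card : ℝ) ≤ ((τ.filter (fun i => r i ≤ γ)).card : ℝ)
      + ((τ.filter (fun i => γ ≤ r i)).card : ℝ) := by exact_mod_cast h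
    linarith
  have h3 : (m : ℝ) * (α * (1 - q) - β)
      ≤ (((τ.filter (fun i => γ ≤ r i)) \ C).card : ℝ) := by
    have hs : (τ.filter (fun i => γ ≤ r i)).card
        ≤ ((τ.filter (fun i => γ ≤ r i)) \ C).card + C.card := by
      have := Finset.le_card_sdiff C (τ.filter (fun i => γ ≤ r i))
      omega
    have hs' : ((τ.filter (fun i => γ ≤ r i)).card : ℝ)
        ≤ (((τ.filter (fun i => γ ≤ r i)) \ C).card : ℝ) + (C.card : ℝ) := by exact_mod_cast hs
    have hf : (⌊q * (τ.card : ℝ)⌋₊ : ℝ) ≤ q * (τ.card : ℝ) := Nat.floor_le (by positivity)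
    have hc : α * (m : ℝ) ≤ (τ.card : ℝ) := by rw [hτ]; exact Nat.le_ceil _
    have := mul_le_mul_of_nonneg_left hc (sub_nonneg.2 hq1.le)
    linarith
  refine ⟨?_, h2, h3⟩
  calc γ ^ 2 * ((m : ℝ) * (α * (1 - q) - β))
      ≤ γ ^ 2 * (((τ.filter (fun i => γ ≤ r i)) \ C).card : ℝ) :=
        mul_le_mul_of_nonneg_left h3 (sq_nonneg _)
    _ = ∑ i ∈ (τ.filter (fun i => γ ≤ r i)) \ C, γ ^ 2 := by
        rw [Finset.sum_const, nsmul_eq_mul, mul_comm]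
    _ ≤ ∑ i ∈ (τ.filter (fun i => γ ≤ r i)) \ C, r i ^ 2 := by
        refine Finset.sum_le_sum fun i hi => ?_
        have : γ ≤ r i := (Finset.mem_filter.1 (Finset.mem_sdiff.1 hi).1).2
        exact pow_le_pow_left₀ hγ0 this 2
    _ ≤ ∑ i ∈ τ \ C, r i ^ 2 :=
        Finset.sum_le_sum_of_subset_of_nonneg
          (Finset.sdiff_subset_sdiff (Finset.filter_subset _ _) le_rfl)
          fun i _ _ => sq_nonneg _
end

section
/- Let A ∈ ℝ^{m×n} have unit-norm rows a_1,…,a_m, let x, x_k ∈ ℝ^n, b = Ax, and let b̂ = b + c where c is supported on C ⊆ {1,…,m} with |C| ≤ βm. Fix q ∈ (0,1), α ∈ (0,1] with α(1−q) > β. Let S ⊆ C be a nonempty set of corrupted indices such that every i ∈ S satisfies |⟨a_i, x_k⟩ − b̂_i| ≤ σ_max(A)/√(m[α(1−q) − β]) · ‖x_k − x‖. For i ∈ S define x_{k+1}(i) = x_k + (b̂_i − ⟨a_i, x_k⟩) a_i. Then the average approximation error over S satisfies (1/|S|) Σ_{i ∈ S} ‖x_{k+1}(i) − x‖² ≤ r_C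 ‖x_k − x‖², where r_C = 1 + (2/√|S|)·σ_max(A)²/√(m[α(1−q) − β]) + σ_max(A)²/(m[α(1−q) − β]). -/
open Finset

theorem sigmaMax_nonneg_aux {m n : ℕ} (A : Matrix (Fin m) (Fin n) ℝ) : 0 ≤ sigmaMax A := by
  apply Real.sSup_nonneg
  rintro r ⟨x, -, rfl⟩
  exact Real.sqrt_nonneg _

theorem sigmaMax_bound_aux {m n : ℕ} (A : Matrix (Fin m) (Fin n) ℝ) (e : Fin n → ℝ) :
    ∑ i, (∑ j, A i j * e j) ^ 2 ≤ sigmaMax A ^ 2 * ∑ j, (e j) ^ 2 := by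
  have hE0 : 0 ≤ ∑ j, (e j) ^ 2 := Finset.sum_nonneg (fun j _ => sq_nonneg _)
  have hcs : ∀ (y : Fin n → ℝ), ∑ i, (∑ j, A i j * y j) ^ 2
      ≤ (∑ i, ∑ j, (A i j) ^ 2) * ∑ j, (y j) ^ 2 := by
    intro y
    rw [Finset.sum_mul]
    exact Finset.sum_le_sum (fun i _ => Finset.sum_mul_sq_le_sq_mul_sq _ _ _)
  rcases hE0.eq_or_lt with h0 | hpos
  · have := hcs e
    rw [← h0] at this ⊢
    simpa using this
  · set E := ∑ j, (e j) ^ 2 with hE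
    have hs : 0 < Real.sqrt E := Real.sqrt_pos.mpr hpos
    have hss : Real.sqrt E ^ 2 = E := Real.sq_sqrt hE0
    have hle : Real.sqrt (∑ i, (∑ j, A i j * (e j / Real.sqrt E)) ^ 2) ≤ sigmaMax A := by
      apply le_csSup
      · refine ⟨Real.sqrt (∑ i, ∑ j, (A i j) ^ 2), ?_⟩
        rintro r ⟨y, hy, rfl⟩
        apply Real.sqrt_le_sqrt
        have := hcs y
        rwa [hy, mul_one] at this
      · refine ⟨fun j => e j / Real.sqrt E, ?_, rfl⟩
        simp only [div_pow]
        rw [← Finset.sum_div, hss, ← hE, div_self hpos.ne']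
    have heq : ∑ i, (∑ j, A i j * (e j / Real.sqrt E)) ^ 2
        = (∑ i, (∑ j, A i j * e j) ^ 2) / E := by
      simp only [← mul_div_assoc, ← Finset.sum_div, div_pow, hss]
    rw [heq] at hle
    have h2 := (Real.sqrt_le_left (sigmaMax_nonneg_aux A)).mp hle
    rwa [div_le_iff₀ hpos] at h2

/-- **Projection onto accepted corrupted equations (Lemma 2).**  If `A` has unit-norm rows,
`b = Ax`, `b̂ = b + c` with `c` supported on `C`, `|C| ≤ βm`, `q ∈ (0,1)`, `α ∈ (0,1]` with
`α(1-q) > β`, and `S ⊆ C` is a nonempty set of corrupted indices whose residuals at `x_k` are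
all at most `σ_max(A)/√(m[α(1-q) - β]) · ‖x_k - x‖`, then the average squared error over the
Kaczmarz updates `x_{k+1}(i) = x_k + (b̂_i - ⟨a_i, x_k⟩) a_i`, `i ∈ S`, satisfies
`(1/|S|) Σ_{i ∈ S} ‖x_{k+1}(i) - x‖² ≤ r_C ‖x_k - x‖²` with
`r_C = 1 + (2/√|S|)·σ_max(A)²/√(m[α(1-q) - β]) + σ_max(A)²/(m[α(1-q) - β])`. -/
theorem corrupted_projection {m n : ℕ}
    (A : Matrix (Fin m) (Fin n) ℝ) (hrows : ∀ i, ∑ j, (A i j) ^ 2 = 1)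
    (x xk : Fin n → ℝ) (b c bhat : Fin m → ℝ)
    (hb : ∀ i, b i = ∑ j, A i j * x j)
    (hbhat : ∀ i, bhat i = b i + c i)
    (C : Finset (Fin m)) (hsupp : ∀ i, c i ≠ 0 → i ∈ C)
    (β : ℝ) (hC : (C.card : ℝ) ≤ β * (m : ℝ))
    (q : ℝ) (hq0 : 0 < q) (hq1 : q < 1)
    (α : ℝ) (hα0 : 0 < α) (hα1 : α ≤ 1)
    (hαqβ : β < α * (1 - q))
    (S : Finset (Fin m)) (hSC : S ⊆ C) (hS : S.Nonempty)
    (hres : ∀ i ∈ S, |(∑ j, A i j * xk j) - bhat i|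
      ≤ sigmaMax A / Real.sqrt ((m : ℝ) * (α * (1 - q) - β)) *
          Real.sqrt (∑ j, (xk j - x j) ^ 2)) :
    (1 / (S.card : ℝ)) *
        ∑ i ∈ S, ∑ j, ((xk j + (bhat i - ∑ j', A i j' * xk j') * A i j) - x j) ^ 2
      ≤ (1 + 2 / Real.sqrt (S.card : ℝ) *
            (sigmaMax A ^ 2 / Real.sqrt ((m : ℝ) * (α * (1 - q) - β))) +
          sigmaMax A ^ 2 / ((m : ℝ) * (α * (1 - q) - β))) *
        ∑ j, (xk j - x j) ^ 2 := by
  have hσ := sigmaMax_nonneg_aux A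
  have hbd := sigmaMax_bound_aux A (fun j => xk j - x j)
  obtain ⟨i0, hi0⟩ := hS
  have hm : (0 : ℝ) < m := by exact_mod_cast (Nat.zero_le _).trans_lt i0.2
  have hD : 0 < (m : ℝ) * (α * (1 - q) - β) := mul_pos hm (by linarith)
  have hN : (0 : ℝ) < S.card := by exact_mod_cast Finset.card_pos.mpr ⟨i0, hi0⟩
  have hE0 : 0 ≤ ∑ j, (xk j - x j) ^ 2 := Finset.sum_nonneg (fun j _ => sq_nonneg _)
  generalize (m : ℝ) * (α * (1 - q) - β) = D at *
  generalize sigmaMax A = σ at *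
  set E := ∑ j, (xk j - x j) ^ 2 with hE
  set r : Fin m → ℝ := fun i => bhat i - ∑ j', A i j' * xk j' with hr
  set t : Fin m → ℝ := fun i => ∑ j, A i j * (xk j - x j) with ht
  have hexp : ∀ i, ∑ j, ((xk j + (bhat i - ∑ j', A i j' * xk j') * A i j) - x j) ^ 2
      = E + 2 * (r i * t i) + r i ^ 2 := by
    intro i
    have h1 : ∀ j, ((xk j + (bhat i - ∑ j', A i j' * xk j') * A i j) - x j) ^ 2
        = (xk j - x j) ^ 2 + 2 * r i * (A i j * (xk j - x j)) + r i ^ 2 * (A i j) ^ 2 := by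
      intro j
      simp only [hr]
      ring
    rw [Finset.sum_congr rfl (fun j _ => h1 j), Finset.sum_add_distrib, Finset.sum_add_distrib,
      ← Finset.mul_sum, ← Finset.mul_sum, hrows i]
    simp only [hE, ht]
    ring
  have hsD : 0 < Real.sqrt D := Real.sqrt_pos.mpr hD
  have hsN : 0 < Real.sqrt (S.card : ℝ) := Real.sqrt_pos.mpr hN
  have hsD2 : Real.sqrt D ^ 2 = D := Real.sq_sqrt hD.le
  have hsN2 : Real.sqrt (S.card : ℝ) ^ 2 = S.card := Real.sq_sqrt hN.le
  have hsE2 : Real.sqrt E ^ 2 = E := Real.sq_sqrt hE0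
  have hr2 : ∀ i ∈ S, r i ^ 2 ≤ σ ^ 2 / D * E := by
    intro i hi
    have h := hres i hi
    rw [abs_sub_comm] at h
    have h2 := pow_le_pow_left₀ (abs_nonneg _) h 2
    rwa [sq_abs, mul_pow, div_pow, hsD2, hsE2] at h2
  have hsumr : ∑ i ∈ S, r i ^ 2 ≤ S.card * (σ ^ 2 / D * E) := by
    have := Finset.sum_le_card_nsmul S _ _ hr2
    rwa [nsmul_eq_mul] at this
  have hsumt : ∑ i ∈ S, t i ^ 2 ≤ σ ^ 2 * E :=
    (Finset.sum_le_sum_of_subset_of_nonneg (Finset.subset_univ S)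
      (fun i _ _ => sq_nonneg _)).trans hbd
  have hcross : ∑ i ∈ S, r i * t i ≤ Real.sqrt (S.card : ℝ) * (σ ^ 2 / Real.sqrt D) * E := by
    refine (abs_le_of_sq_le_sq' ?_ ?_).2
    rotate_left
    · positivity
    · calc (∑ i ∈ S, r i * t i) ^ 2 ≤ (∑ i ∈ S, r i ^ 2) * ∑ i ∈ S, t i ^ 2 :=
            Finset.sum_mul_sq_le_sq_mul_sq _ _ _
        _ ≤ (S.card * (σ ^ 2 / D * E)) * (σ ^ 2 * E) :=
            mul_le_mul hsumr hsumt (Finset.sum_nonneg (fun i _ => sq_nonneg _)) (by positivity)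
        _ = _ := by
            rw [mul_pow, mul_pow, div_pow, hsD2, hsN2]
            ring
  rw [Finset.sum_congr rfl (fun i _ => hexp i), Finset.sum_add_distrib, Finset.sum_add_distrib,
    ← Finset.mul_sum, Finset.sum_const, nsmul_eq_mul, one_div, inv_mul_le_iff₀ hN]
  have hfin : (S.card : ℝ) * ((1 + 2 / Real.sqrt (S.card : ℝ) * (σ ^ 2 / Real.sqrt D) + σ ^ 2 / D) * E)
      = S.card * E + 2 * (Real.sqrt (S.card : ℝ) * (σ ^ 2 / Real.sqrt D) * E)
        + S.card * (σ ^ 2 / D * E) := by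
    have : (S.card : ℝ) * (2 / Real.sqrt (S.card : ℝ)) = 2 * Real.sqrt (S.card : ℝ) := by
      rw [mul_div_assoc', div_eq_iff hsN.ne']
      linear_combination (-2) * hsN2
    linear_combination (σ ^ 2 / Real.sqrt D) * E * this
  rw [hfin]
  linarith
end

section
/- Let A ∈ ℝ^{m×n} (m > n) be a full-rank matrix with unit-norm rows a_1,…,a_m, let x, x_k ∈ ℝ^n, b = Ax. Fix q ∈ (0,1), α ∈ (0,1], β ≥ 0 with αq > β. Let T ⊆ {1,…,m} be a set of uncorrupted indices (so b̂_i = b_i = ⟨a_i,x⟩ for all i ∈ T) with (αq − β)m ≤ |T| ≤ αqm. For i ∈ T define x_{k+1}(i) = x_k + (b_i − ⟨a_i, x_k⟩) a_i. Then (1/|T|) Σ_{i ∈ T} ‖x_{k+1}(i) − x‖² ≤ r_G ‖x_k − x‖², where r_G = 1 − σ_{α,q,β,min}(A)²/(αqm). -/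
open Finset

/-- The smallest singular value of the row submatrix `A_S`:
`inf_{x ≠ 0} ‖A_S x‖ / ‖x‖`. -/
noncomputable def sigmaMinSub {m n : ℕ} (A : Matrix (Fin m) (Fin n) ℝ)
    (S : Finset (Fin m)) : ℝ :=
  sInf {r : ℝ | ∃ x : Fin n → ℝ, x ≠ 0 ∧
    r = Real.sqrt (∑ i ∈ S, (∑ j, A i j * x j) ^ 2) / Real.sqrt (∑ j, (x j) ^ 2)}

/-- `σ_{α,q,β,min}(A)`: the minimum over all row subsets `S` with `|S|/m ≥ αq - β` of the
smallest singular value of `A_S`. -/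
noncomputable def sigmaQMin {m n : ℕ} (A : Matrix (Fin m) (Fin n) ℝ) (α q β : ℝ) : ℝ :=
  sInf {r : ℝ | ∃ S : Finset (Fin m), α * q - β ≤ (S.card : ℝ) / (m : ℝ) ∧ r = sigmaMinSub A S}

theorem sigmaMinSub_nonneg' {m n : ℕ} (A : Matrix (Fin m) (Fin n) ℝ)
    (S : Finset (Fin m)) : 0 ≤ sigmaMinSub A S := by
  apply Real.sInf_nonneg
  rintro r ⟨x, -, rfl⟩
  positivity

theorem sigmaQMin_nonneg' {m n : ℕ} (A : Matrix (Fin m) (Fin n) ℝ) (α q β : ℝ) :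
    0 ≤ sigmaQMin A α q β := by
  apply Real.sInf_nonneg
  rintro r ⟨S, -, rfl⟩
  exact sigmaMinSub_nonneg' A S

theorem sigma_bound {m n : ℕ} (A : Matrix (Fin m) (Fin n) ℝ) (α q β : ℝ)
    (T : Finset (Fin m)) (hT : α * q - β ≤ (T.card : ℝ) / (m : ℝ)) (e : Fin n → ℝ) :
    sigmaQMin A α q β ^ 2 * ∑ j, (e j) ^ 2 ≤ ∑ i ∈ T, (∑ j, A i j * e j) ^ 2 := by
  have hD : 0 ≤ ∑ i ∈ T, (∑ j, A i j * e j) ^ 2 := Finset.sum_nonneg fun _ _ => sq_nonneg _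
  have hE : 0 ≤ ∑ j, (e j) ^ 2 := Finset.sum_nonneg fun _ _ => sq_nonneg _
  rcases hE.eq_or_lt with h0 | hpos
  · rw [← h0, mul_zero]; exact hD
  have he : e ≠ 0 := by
    rintro rfl
    simp at hpos
  have h1 : sigmaQMin A α q β ≤ sigmaMinSub A T := by
    apply csInf_le
    · refine ⟨0, ?_⟩
      rintro r ⟨S, -, rfl⟩
      exact sigmaMinSub_nonneg' A S
    · exact ⟨T, hT, rfl⟩
  have h2 : sigmaMinSub A T ≤
      Real.sqrt (∑ i ∈ T, (∑ j, A i j * e j) ^ 2) / Real.sqrt (∑ j, (e j) ^ 2) := by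
    apply csInf_le
    · refine ⟨0, ?_⟩
      rintro r ⟨x, -, rfl⟩
      positivity
    · exact ⟨e, he, rfl⟩
  have h3 := pow_le_pow_left₀ (sigmaQMin_nonneg' A α q β) (h1.trans h2) 2
  rw [div_pow, Real.sq_sqrt hD, Real.sq_sqrt hE, le_div_iff₀ hpos] at h3
  exact h3

/-- **Projection onto accepted uncorrupted equations (Lemma 3).**  If `A` is a full-rank
row-normalized `m × n` matrix (`m > n`), `b = Ax`, `q ∈ (0,1)`, `α ∈ (0,1]`, `β ≥ 0` with
`αq > β`, and `T` is a set of uncorrupted indices (`b̂_i = b_i = ⟨a_i, x⟩` on `T`) with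
`(αq - β)m ≤ |T| ≤ αqm`, then the average squared error over the Kaczmarz updates
`x_{k+1}(i) = x_k + (b_i - ⟨a_i, x_k⟩) a_i`, `i ∈ T`, satisfies
`(1/|T|) Σ_{i ∈ T} ‖x_{k+1}(i) - x‖² ≤ (1 - σ_{α,q,β,min}(A)²/(αqm)) ‖x_k - x‖²`. -/
theorem uncorrupted_projection {m n : ℕ} (hmn : n < m)
    (A : Matrix (Fin m) (Fin n) ℝ) (hrank : A.rank = n)
    (hrows : ∀ i, ∑ j, (A i j) ^ 2 = 1)
    (x xk : Fin n → ℝ) (b bhat : Fin m → ℝ)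
    (hb : ∀ i, b i = ∑ j, A i j * x j)
    (q : ℝ) (hq0 : 0 < q) (hq1 : q < 1)
    (α : ℝ) (hα0 : 0 < α) (hα1 : α ≤ 1)
    (β : ℝ) (hβ : 0 ≤ β) (hαqβ : β < α * q)
    (T : Finset (Fin m))
    (hhat : ∀ i ∈ T, bhat i = b i)
    (hT1 : (α * q - β) * (m : ℝ) ≤ (T.card : ℝ))
    (hT2 : (T.card : ℝ) ≤ α * q * (m : ℝ)) :
    (1 / (T.card : ℝ)) *
        ∑ i ∈ T, ∑ j, ((xk j + (b i - ∑ j', A i j' * xk j') * A i j) - x j) ^ 2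
      ≤ (1 - sigmaQMin A α q β ^ 2 / (α * q * (m : ℝ))) * ∑ j, (xk j - x j) ^ 2 := by
  have hm : (0 : ℝ) < m := by exact_mod_cast (Nat.zero_le n).trans_lt hmn
  have ht : (0 : ℝ) < T.card := lt_of_lt_of_le (mul_pos (by linarith) hm) hT1
  have hB := sigma_bound A α q β T ((le_div_iff₀ hm).2 hT1) (fun j => xk j - x j)
  have hin : ∀ i, ∑ j, ((xk j + (b i - ∑ j', A i j' * xk j') * A i j) - x j) ^ 2
      = ∑ j, (xk j - x j) ^ 2 - (∑ j, A i j * (xk j - x j)) ^ 2 := by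
    intro i
    have hd : b i - ∑ j', A i j' * xk j' = -(∑ j, A i j * (xk j - x j)) := by
      simp only [hb, mul_sub, Finset.sum_sub_distrib]; ring
    rw [hd]
    generalize hg : ∑ j, A i j * (xk j - x j) = d
    have : ∀ j, ((xk j + (-d) * A i j) - x j) ^ 2
        = (xk j - x j) ^ 2 - 2 * d * (A i j * (xk j - x j)) + d ^ 2 * (A i j) ^ 2 := by
      intro j; ring
    simp only [this, Finset.sum_add_distrib, Finset.sum_sub_distrib, ← Finset.mul_sum, hrows, hg]
    ring
  simp only [hin, Finset.sum_sub_distrib, Finset.sum_const, nsmul_eq_mul]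
  have hD : 0 ≤ ∑ i ∈ T, (∑ j, A i j * (xk j - x j)) ^ 2 :=
    Finset.sum_nonneg fun _ _ => sq_nonneg _
  generalize ∑ i ∈ T, (∑ j, A i j * (xk j - x j)) ^ 2 = D at *
  generalize ∑ j, (xk j - x j) ^ 2 = E at *
  have key : sigmaQMin A α q β ^ 2 * E / (α * q * m) ≤ D / T.card :=
    div_le_div₀ hD hB ht hT2
  calc _ = E - D / T.card := by field_simp
    _ ≤ E - sigmaQMin A α q β ^ 2 * E / (α * q * m) := by linarith
    _ = _ := by ring
end

section
/- Let A ∈ ℝ^{m×n} (m ≥ n) be a full-rank matrix, x ∈ ℝ^n, b = Ax. Let (x_k) be the iterates of the randomized Kaczmarz method: x_{k+1} = x_k + ((b_i − ⟨x_k, a_i⟩)/‖a_i‖²) a_i where at each step the row index i is chosen at random with probability proportional to ‖a_i‖². Then for every k ≥ 0, 𝔼‖x_k − x‖² ≤ r^k ‖x_0 − x‖², where r = 1 − σ_min(A)²/‖A‖_F². -/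
open Finset

/-- `rkExp A b x⋆ k v` is the expected squared error `𝔼‖x_k - x⋆‖²` of the randomized
Kaczmarz algorithm after `k` steps started at `x_0 = v`, where at each step the row index `i`
is chosen at random with probability `‖a_i‖²/‖A‖_F²` and
`x_{k+1} = x_k + ((b_i - ⟨x_k, a_i⟩)/‖a_i‖²) a_i`. -/
noncomputable def rkExp {m n : ℕ} (A : Matrix (Fin m) (Fin n) ℝ) (b : Fin m → ℝ)
    (xstar : Fin n → ℝ) : ℕ → (Fin n → ℝ) → ℝ
  | 0, v => ∑ j, (v j - xstar j) ^ 2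
  | k + 1, v =>
    ∑ i, ((∑ j, (A i j) ^ 2) / (∑ i', ∑ j, (A i' j) ^ 2)) *
      rkExp A b xstar k
        (fun j => v j + ((b i - ∑ j', A i j' * v j') / (∑ j', (A i j') ^ 2)) * A i j)

theorem rk_sigma_le {m n : ℕ} (A : Matrix (Fin m) (Fin n) ℝ) (e : Fin n → ℝ) :
    sigmaMinSub A Finset.univ ^ 2 * ∑ j, (e j) ^ 2 ≤ ∑ i, (∑ j, A i j * e j) ^ 2 := by
  by_cases he : e = 0
  · subst he; simp
  have hpos : 0 < ∑ j, (e j) ^ 2 := by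
    obtain ⟨j, hj⟩ := Function.ne_iff.mp he
    have hj' : e j ≠ 0 := hj
    exact Finset.sum_pos' (fun _ _ => sq_nonneg _) ⟨j, Finset.mem_univ _, by positivity⟩
  have hN : 0 ≤ ∑ i, (∑ j, A i j * e j) ^ 2 := Finset.sum_nonneg fun _ _ => sq_nonneg _
  have h0 : 0 ≤ sigmaMinSub A Finset.univ := by
    apply Real.sInf_nonneg
    rintro r ⟨y, -, rfl⟩
    positivity
  have h1 : sigmaMinSub A Finset.univ ≤
      Real.sqrt (∑ i, (∑ j, A i j * e j) ^ 2) / Real.sqrt (∑ j, (e j) ^ 2) := by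
    apply csInf_le
    · refine ⟨0, ?_⟩
      rintro r ⟨y, -, rfl⟩
      positivity
    · exact ⟨e, he, rfl⟩
  have h2 := pow_le_pow_left₀ h0 h1 2
  rw [div_pow, Real.sq_sqrt hN, Real.sq_sqrt hpos.le, le_div_iff₀ hpos] at h2
  exact h2

theorem rk_row {n : ℕ} (a e : Fin n → ℝ) :
    (∑ j, (a j) ^ 2) * ∑ j, (e j - (∑ j', a j' * e j') / (∑ j', (a j') ^ 2) * a j) ^ 2
      = (∑ j, (a j) ^ 2) * (∑ j, (e j) ^ 2) - (∑ j, a j * e j) ^ 2 := by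
  by_cases h : ∑ j, (a j) ^ 2 = 0
  · have ha : ∀ j, a j = 0 := by
      intro j
      have := (Finset.sum_eq_zero_iff_of_nonneg (fun j _ => sq_nonneg (a j))).mp h j
        (Finset.mem_univ j)
      exact pow_eq_zero_iff (two_ne_zero) |>.mp this
    simp [ha]
  · have key : ∀ c : ℝ, ∑ j, (e j - c * a j) ^ 2
        = ∑ j, (e j) ^ 2 - 2 * c * (∑ j, a j * e j) + c ^ 2 * ∑ j, (a j) ^ 2 := by
      intro c
      rw [Finset.mul_sum, Finset.mul_sum, ← Finset.sum_sub_distrib, ← Finset.sum_add_distrib]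
      exact Finset.sum_congr rfl fun j _ => by ring
    rw [key]
    field_simp
    ring

theorem rk_step {m n : ℕ} (A : Matrix (Fin m) (Fin n) ℝ) (x : Fin n → ℝ) (b : Fin m → ℝ)
    (hb : ∀ i, b i = ∑ j, A i j * x j) (hF : 0 < ∑ i, ∑ j, (A i j) ^ 2) (v : Fin n → ℝ) :
    ∑ i, ((∑ j, (A i j) ^ 2) / (∑ i', ∑ j, (A i' j) ^ 2)) *
      ∑ j, (v j + ((b i - ∑ j', A i j' * v j') / (∑ j', (A i j') ^ 2)) * A i j - x j) ^ 2
    ≤ (1 - sigmaMinSub A Finset.univ ^ 2 / (∑ i, ∑ j, (A i j) ^ 2)) *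
          ∑ j, (v j - x j) ^ 2 := by
  have hs := rk_sigma_le A (fun j => v j - x j)
  have hterm : ∀ i, ((∑ j, (A i j) ^ 2) / (∑ i', ∑ j, (A i' j) ^ 2)) *
      ∑ j, (v j + ((b i - ∑ j', A i j' * v j') / (∑ j', (A i j') ^ 2)) * A i j - x j) ^ 2
      = ((∑ j, (A i j) ^ 2) * (∑ j, (v j - x j) ^ 2) - (∑ j, A i j * (v j - x j)) ^ 2)
        / (∑ i', ∑ j, (A i' j) ^ 2) := by
    intro i
    rw [← rk_row (A i) (fun j => v j - x j), div_mul_eq_mul_div]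
    congr 2
    refine Finset.sum_congr rfl fun j _ => ?_
    have : b i - ∑ j', A i j' * v j' = -∑ j', A i j' * (v j' - x j') := by
      rw [hb]; simp only [mul_sub, Finset.sum_sub_distrib]; ring
    rw [this]; ring
  rw [Finset.sum_congr rfl fun i _ => hterm i, ← Finset.sum_div, Finset.sum_sub_distrib,
    ← Finset.sum_mul, div_le_iff₀ hF]
  have : (1 - sigmaMinSub A Finset.univ ^ 2 / (∑ i, ∑ j, (A i j) ^ 2)) *
      (∑ j, (v j - x j) ^ 2) * (∑ i, ∑ j, (A i j) ^ 2)
      = (∑ i, ∑ j, (A i j) ^ 2) * (∑ j, (v j - x j) ^ 2)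
        - sigmaMinSub A Finset.univ ^ 2 * ∑ j, (v j - x j) ^ 2 := by
    field_simp
  rw [this]
  linarith

/-- **Randomized Kaczmarz convergence (Strohmer–Vershynin).**  If `A ∈ ℝ^{m×n}` (`m ≥ n`) is
full rank, `b = Ax`, then the randomized Kaczmarz iterates satisfy
`𝔼‖x_k - x‖² ≤ r^k ‖x_0 - x‖²` with `r = 1 - σ_min(A)²/‖A‖_F²`. -/
theorem randomized_kaczmarz_convergence {m n : ℕ} (hmn : n ≤ m)
    (A : Matrix (Fin m) (Fin n) ℝ) (hrank : A.rank = n)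
    (x : Fin n → ℝ) (b : Fin m → ℝ)
    (hb : ∀ i, b i = ∑ j, A i j * x j)
    (x0 : Fin n → ℝ) :
    ∀ k : ℕ, rkExp A b x k x0
      ≤ (1 - sigmaMinSub A Finset.univ ^ 2 / (∑ i, ∑ j, (A i j) ^ 2)) ^ k *
          ∑ j, (x0 j - x j) ^ 2 := by
  rcases (Finset.sum_nonneg fun i _ => Finset.sum_nonneg fun j _ => sq_nonneg (A i j) :
    0 ≤ ∑ i, ∑ j, (A i j) ^ 2).eq_or_lt with hF | hF
  · intro k
    cases k with
    | zero => simp [rkExp]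
    | succ k =>
      simp only [rkExp, ← hF, div_zero, zero_mul, Finset.sum_const_zero, sub_zero, one_pow, one_mul]
      exact Finset.sum_nonneg fun _ _ => sq_nonneg _
  have hr : 0 ≤ 1 - sigmaMinSub A Finset.univ ^ 2 / (∑ i, ∑ j, (A i j) ^ 2) := by
    have hn : 0 < n := by
      rcases Nat.eq_zero_or_pos n with h | h
      · subst h; simp at hF
      · exact h
    have h := rk_step A x b hb hF (fun j => x j + 1)
    have h2 : 0 ≤ (1 - sigmaMinSub A Finset.univ ^ 2 / (∑ i, ∑ j, (A i j) ^ 2)) *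
        ∑ j, ((fun j => x j + 1) j - x j) ^ 2 := le_trans (by positivity) h
    have h3 : 0 < ∑ j : Fin n, ((fun j => x j + 1) j - x j) ^ 2 := by
      simp [hn]
    exact nonneg_of_mul_nonneg_left h2 h3
  intro k
  induction k generalizing x0 with
  | zero => simp [rkExp]
  | succ k ih =>
    simp only [rkExp]
    refine (Finset.sum_le_sum fun i _ => mul_le_mul_of_nonneg_left (ih _) (by positivity)).trans ?_
    have h := mul_le_mul_of_nonneg_left (rk_step A x b hb hF x0) (pow_nonneg hr k)
    rw [← mul_assoc, ← pow_succ, Finset.mul_sum] at h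
    refine le_trans (le_of_eq (Finset.sum_congr rfl fun i _ => ?_)) h
    ring
end
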